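/- Fix p > 0, ε ∈ (0,1/2) and γ ∈ (0,1), and d ∈ ℕ with εd an integer. Let 𝒞 ⊆ B(d, εd) be a code such that any two distinct codewords have at most (ε²+γ)d ones in common, let T ⊆ 𝒞 and y ∈ 𝒞 \ T, and set S = {1,…,d} \ supp(y). Let A be the multiset of rows consisting of 2^{εd} copies of the all-ones word 1_d together with one copy of each word in star_2(T). Then the frequency of the all-zeros pattern satisfies f_{0_S}(A,S) ≤ |𝒞| · 2^{(ε²+γ)d}, while F_p(A,S) ≥ 2^{εpd}. -/

import Mathlib

open scoped Classical

/-- The support of a binary word: the set of coordinates where it equals 1. -/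
def supp2 {d : ℕ} (w : Fin d → Fin 2) : Finset (Fin d) :=
  Finset.univ.filter (fun i => w i ≠ 0)

/-- `star_2(T)`: all binary words whose support is contained in the support of some
word in `T`. -/
def star2 {d : ℕ} (T : Finset (Fin d → Fin 2)) : Finset (Fin d → Fin 2) :=
  Finset.univ.filter (fun w => ∃ y ∈ T, supp2 w ⊆ supp2 y)

/-- The frequency of the pattern `z ∈ {0,1}^S` among the rows of the multiset `A`:
the number of rows `w` of `A` with `w|_S = z`. -/
noncomputable def freq {d : ℕ} (A : Multiset (Fin d → Fin 2)) (S : Finset (Fin d))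
    (z : S → Fin 2) : ℕ :=
  (A.filter (fun w => ∀ i : S, w i = z i)).card

/-- The projected frequency moment `F_p(A,S) = Σ_z f_z(A,S)^p`. -/
noncomputable def Fp {d : ℕ} (A : Multiset (Fin d → Fin 2)) (S : Finset (Fin d))
    (p : ℝ) : ℝ :=
  ∑ z : S → Fin 2, (freq A S z : ℝ) ^ p

/-!
A row restricts to `0_S`, where `S` is the complement of `supp(y)`, exactly when its support lies in
`supp(y)`. The rows of `star_2(T)` with this property have support inside `supp(t) ∩ supp(y)` for
some `t ∈ T`, which leaves at most `2^{(ε²+γ)d}` words for each of the at most `|𝒞| - 1` codewords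
`t`. The all-ones rows contribute only when `y = 1_d`; then `k = d`, so `ε² d = d` and their number
`2^d` fits into the share `2^{(ε²+γ)d}` of the codeword `y` itself.
-/

section Words

variable {d : ℕ}

theorem supp2_injective : Function.Injective (supp2 (d := d)) := by
  intro v w h
  funext i
  have hi : v i ≠ 0 ↔ w i ≠ 0 := by simpa [supp2] using congrArg (i ∈ ·) h
  lia

theorem supp2_one : supp2 (fun _ : Fin d => 1) = Finset.univ := by
  simp [supp2]

theorem card_filter_supp2_subset_le (U : Finset (Fin d)) :
    (Finset.univ.filter (supp2 · ⊆ U)).card ≤ 2 ^ U.card := by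
  rw [← Finset.card_powerset]
  exact Finset.card_le_card_of_injOn supp2 (fun w hw => by simpa using hw) supp2_injective.injOn

theorem card_filter_star2_le_sum (T : Finset (Fin d → Fin 2)) (U : Finset (Fin d)) :
    ((star2 T).filter (supp2 · ⊆ U)).card ≤ ∑ t ∈ T, 2 ^ (supp2 t ∩ U).card := by
  have hcover : (star2 T).filter (supp2 · ⊆ U) ⊆
      T.biUnion fun t => Finset.univ.filter (supp2 · ⊆ supp2 t ∩ U) := by
    intro w hw
    simp only [star2, Finset.mem_filter, Finset.mem_univ, true_and] at hw
    obtain ⟨⟨t, ht, hwt⟩, hwU⟩ := hw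
    simpa using ⟨t, ht, Finset.subset_inter hwt hwU⟩
  calc ((star2 T).filter (supp2 · ⊆ U)).card
      ≤ ∑ t ∈ T, (Finset.univ.filter (supp2 · ⊆ supp2 t ∩ U)).card :=
        (Finset.card_le_card hcover).trans Finset.card_biUnion_le
    _ ≤ ∑ t ∈ T, 2 ^ (supp2 t ∩ U).card :=
        Finset.sum_le_sum fun t _ => card_filter_supp2_subset_le _

theorem card_filter_star2_le_card_mul_rpow {T : Finset (Fin d → Fin 2)} {U : Finset (Fin d)}
    {s : ℝ} (hs : ∀ t ∈ T, ((supp2 t ∩ U).card : ℝ) ≤ s) :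
    (((star2 T).filter (supp2 · ⊆ U)).card : ℝ) ≤ T.card * (2 : ℝ) ^ s := by
  calc (((star2 T).filter (supp2 · ⊆ U)).card : ℝ)
      ≤ ∑ t ∈ T, (2 : ℝ) ^ (supp2 t ∩ U).card := mod_cast card_filter_star2_le_sum T U
    _ ≤ ∑ _t ∈ T, (2 : ℝ) ^ s := by
        refine Finset.sum_le_sum fun t ht => ?_
        rw [← Real.rpow_natCast]
        exact Real.rpow_le_rpow_of_exponent_le one_le_two (hs t ht)
    _ = T.card * (2 : ℝ) ^ s := by rw [Finset.sum_const, nsmul_eq_mul]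

end Words

section Frequencies

variable {d : ℕ}

theorem freq_add (A B : Multiset (Fin d → Fin 2)) (S : Finset (Fin d)) (z : S → Fin 2) :
    freq (A + B) S z = freq A S z + freq B S z := by
  simp only [freq, Multiset.filter_add, Multiset.card_add]

theorem freq_compl_zero (A : Multiset (Fin d → Fin 2)) (U : Finset (Fin d)) :
    freq A (Finset.univ \ U) (fun _ => 0) = (A.filter (supp2 · ⊆ U)).card := by
  unfold freq
  congr 1
  refine Multiset.filter_congr fun w _ => ?_
  simp only [supp2, Finset.subset_iff, Finset.mem_filter, Finset.mem_univ, true_and,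
    Subtype.forall, Finset.mem_sdiff]
  exact forall_congr' fun i => not_imp_comm

theorem freq_replicate_self (m : ℕ) (w : Fin d → Fin 2) (S : Finset (Fin d)) :
    freq (Multiset.replicate m w) S (fun i => w i) = m := by
  rw [freq, Multiset.filter_eq_self.mpr, Multiset.card_replicate]
  intro v hv i
  rw [Multiset.eq_of_mem_replicate hv]

theorem freq_replicate_le (m : ℕ) (w : Fin d → Fin 2) (S : Finset (Fin d)) (z : S → Fin 2) :
    freq (Multiset.replicate m w) S z ≤ m :=
  (Multiset.card_le_card (Multiset.filter_le _ _)).trans_eq (Multiset.card_replicate m w)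

theorem freq_replicate_one_compl_zero_of_ne_univ (m : ℕ) {U : Finset (Fin d)}
    (hU : U ≠ Finset.univ) :
    freq (Multiset.replicate m fun _ => 1) (Finset.univ \ U) (fun _ => 0) = 0 := by
  rw [freq_compl_zero, Multiset.card_eq_zero, Multiset.filter_eq_nil]
  intro w hw hwU
  rw [Multiset.eq_of_mem_replicate hw, supp2_one] at hwU
  exact hU (Finset.univ_subset_iff.mp hwU)

theorem rpow_freq_le_Fp (A : Multiset (Fin d → Fin 2)) (S : Finset (Fin d)) (z : S → Fin 2)
    (p : ℝ) : (freq A S z : ℝ) ^ p ≤ Fp A S p :=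
  Finset.single_le_sum (f := fun z : S → Fin 2 => (freq A S z : ℝ) ^ p)
    (fun _ _ => by positivity) (Finset.mem_univ z)

theorem rpow_le_Fp_replicate_add (m : ℕ) (w : Fin d → Fin 2) (B : Multiset (Fin d → Fin 2))
    (S : Finset (Fin d)) {p : ℝ} (hp : 0 ≤ p) :
    (m : ℝ) ^ p ≤ Fp (Multiset.replicate m w + B) S p := by
  have hm : m ≤ freq (Multiset.replicate m w + B) S fun i => w i := by
    rw [freq_add, freq_replicate_self]
    exact Nat.le_add_right _ _
  calc (m : ℝ) ^ p ≤ (freq (Multiset.replicate m w + B) S fun i => w i : ℝ) ^ p := by gcongr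
    _ ≤ Fp (Multiset.replicate m w + B) S p := rpow_freq_le_Fp _ _ _ _

theorem freq_replicate_one_add_star2_compl_zero_le {m : ℕ} {T : Finset (Fin d → Fin 2)}
    {U : Finset (Fin d)} {s : ℝ} (hs : ∀ t ∈ T, ((supp2 t ∩ U).card : ℝ) ≤ s)
    (hm : U = Finset.univ → (m : ℝ) ≤ 2 ^ s) :
    (freq (Multiset.replicate m (fun _ => 1) + (star2 T).val) (Finset.univ \ U)
      (fun _ => 0) : ℝ) ≤ (T.card + 1) * (2 : ℝ) ^ s := by
  have hones : (freq (Multiset.replicate m fun _ => 1) (Finset.univ \ U) (fun _ => 0) : ℝ) ≤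
      2 ^ s := by
    by_cases hU : U = Finset.univ
    · exact (Nat.cast_le.mpr (freq_replicate_le m _ _ _)).trans (hm hU)
    · rw [freq_replicate_one_compl_zero_of_ne_univ m hU, Nat.cast_zero]
      positivity
  have hstar : (freq (star2 T).val (Finset.univ \ U) (fun _ => 0) : ℝ) ≤
      T.card * (2 : ℝ) ^ s := by
    rw [freq_compl_zero]
    exact card_filter_star2_le_card_mul_rpow hs
  rw [freq_add, Nat.cast_add]
  linarith

end Frequencies

theorem stmt_10_general (d k : ℕ) (p ε γ : ℝ) (hp : 0 ≤ p) (hγ : 0 ≤ γ) (hk : (k : ℝ) = ε * d)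
    (𝒞 T : Finset (Fin d → Fin 2)) (hT : T ⊆ 𝒞) (y : Fin d → Fin 2) (hy𝒞 : y ∈ 𝒞)
    (hyT : y ∉ T) (hyk : (supp2 y).card = k)
    (hcode : ∀ t ∈ T, ((supp2 t ∩ supp2 y).card : ℝ) ≤ (ε ^ 2 + γ) * d) :
    let S : Finset (Fin d) := Finset.univ \ supp2 y
    let A : Multiset (Fin d → Fin 2) :=
      Multiset.replicate (2 ^ k) (fun _ => 1) + (star2 T).val
    ((freq A S (fun _ => 0) : ℝ) ≤ (𝒞.card : ℝ) * (2 : ℝ) ^ ((ε ^ 2 + γ) * d)) ∧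
      (2 : ℝ) ^ (ε * p * d) ≤ Fp A S p := by
  intro S A
  constructor
  · have hones : supp2 y = Finset.univ → ((2 ^ k : ℕ) : ℝ) ≤ 2 ^ ((ε ^ 2 + γ) * d) := by
      intro hy
      have hkd : (k : ℝ) = d := by rw [← hyk, hy, Finset.card_univ, Fintype.card_fin]
      have hεd : ε * d = d := hk.symm.trans hkd
      have hk_le : (k : ℝ) ≤ (ε ^ 2 + γ) * d := by
        calc (k : ℝ) = ε * (ε * d) := by rw [hkd, hεd, hεd]
          _ = ε ^ 2 * d := by ring
          _ ≤ (ε ^ 2 + γ) * d := by gcongr; linarith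
      rw [Nat.cast_pow, Nat.cast_ofNat, ← Real.rpow_natCast]
      exact Real.rpow_le_rpow_of_exponent_le one_le_two hk_le
    have hcard : T.card + 1 ≤ 𝒞.card :=
      Finset.card_lt_card (Finset.ssubset_iff_subset_ne.mpr ⟨hT, fun h => hyT (h ▸ hy𝒞)⟩)
    calc (freq A S (fun _ => 0) : ℝ) ≤ (T.card + 1) * (2 : ℝ) ^ ((ε ^ 2 + γ) * d) :=
          freq_replicate_one_add_star2_compl_zero_le hcode hones
      _ ≤ 𝒞.card * (2 : ℝ) ^ ((ε ^ 2 + γ) * d) := by gcongr; exact_mod_cast hcard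
  · calc (2 : ℝ) ^ (ε * p * d) = ((2 ^ k : ℕ) : ℝ) ^ p := by
          rw [Nat.cast_pow, Nat.cast_ofNat, ← Real.rpow_natCast, ← Real.rpow_mul zero_le_two, hk,
            mul_right_comm]
      _ ≤ Fp A S p := rpow_le_Fp_replicate_add _ _ _ _ hp

/-- Fix `p > 0`, `ε ∈ (0,1/2)`, `γ ∈ (0,1)`, and `d ∈ ℕ` with `k = εd`
an integer.  Let `𝒞 ⊆ B(d, εd)` be a code such that any two distinct codewords have at
most `(ε²+γ)d` ones in common, let `T ⊆ 𝒞` and `y ∈ 𝒞 \ T`, and set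
`S = {1,…,d} \ supp(y)`.  Let `A` be the multiset of rows consisting of `2^{εd}` copies of
the all-ones word together with one copy of each word in `star_2(T)`.  Then the frequency
of the all-zeros pattern satisfies `f_{0_S}(A,S) ≤ |𝒞| · 2^{(ε²+γ)d}`, while
`F_p(A,S) ≥ 2^{εpd}`. -/
theorem stmt_10 (d k : ℕ) (p ε γ : ℝ) (hp : 0 < p) (hε : ε ∈ Set.Ioo (0 : ℝ) (1 / 2))
    (hγ : γ ∈ Set.Ioo (0 : ℝ) 1) (hk : (k : ℝ) = ε * d)
    (𝒞 : Finset (Fin d → Fin 2)) (hw : ∀ z ∈ 𝒞, (supp2 z).card = k)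
    (hcode : ∀ x ∈ 𝒞, ∀ x' ∈ 𝒞, x ≠ x' →
      ((supp2 x ∩ supp2 x').card : ℝ) ≤ (ε ^ 2 + γ) * d)
    (T : Finset (Fin d → Fin 2)) (hT : T ⊆ 𝒞)
    (y : Fin d → Fin 2) (hy𝒞 : y ∈ 𝒞) (hyT : y ∉ T) :
    let S : Finset (Fin d) := Finset.univ \ supp2 y
    let A : Multiset (Fin d → Fin 2) :=
      Multiset.replicate (2 ^ k) (fun _ => 1) + (star2 T).val
    ((freq A S (fun _ => 0) : ℝ) ≤ (𝒞.card : ℝ) * (2 : ℝ) ^ ((ε ^ 2 + γ) * d)) ∧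
      (2 : ℝ) ^ (ε * p * d) ≤ Fp A S p := by
  exact stmt_10_general d k p ε γ hp.le hγ.1.le hk 𝒞 T hT y hy𝒞 hyT (hw y hy𝒞)
    fun t ht => hcode t (hT ht) y hy𝒞 (ne_of_mem_of_not_mem ht hyT)
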